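/- Let φ: (R,m,k) → (S,n,ℓ) be a surjective local ring homomorphism between commutative Noetherian local rings whose kernel is generated by an R-regular sequence, and let R → (R',m',k') ← Q be a quasi-deformation. Set S' = S ⊗_R R', with induced maps δ': S → S' and γ': Q → S'. Then the diagram S → S' ← Q is a quasi-deformation, and the closed fibre of δ' is isomorphic to the closed fibre R'/mR' of R → R'. In particular, if R → R' ← Q is an upper quasi-deformation (respectively, a complete intersection quasi-deformation), then so is S → S' ← Q. -/

import Mathlib

/-!
Common definitions: André–Quillen homology via the standard (comonad/polynomial)
simplicial resolution, complete-intersection (flat) dimensions via quasi-deformations,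
Cohen factorizations, Koszul homology `H₁`, and related notions.
-/

universe u

open TensorProduct IsLocalRing

noncomputable section

/-! ### Flat and projective dimension -/

/-- `FlatDimLE Q n N` : the `Q`-module `N` has flat dimension at most `n`,
i.e. it admits a flat resolution of length at most `n`. -/
def FlatDimLE (Q : Type u) [CommRing Q] : ℕ → (N : Type u) → [AddCommGroup N] → [Module Q N] → Prop
  | 0, N, _, _ => Module.Flat Q N
  | n+1, N, _, _ =>
      ∃ (F : Type u) (_ : AddCommGroup F) (_ : Module Q F) (f : F →ₗ[Q] N),
        Module.Flat Q F ∧ Function.Surjective f ∧ FlatDimLE Q n (LinearMap.ker f)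

/-- `ProjDimLE Q n N` : the `Q`-module `N` has projective dimension at most `n`. -/
def ProjDimLE (Q : Type u) [CommRing Q] : ℕ → (N : Type u) → [AddCommGroup N] → [Module Q N] → Prop
  | 0, N, _, _ => Module.Projective Q N
  | n+1, N, _, _ =>
      ∃ (F : Type u) (_ : AddCommGroup F) (_ : Module Q F) (f : F →ₗ[Q] N),
        Module.Projective Q F ∧ Function.Surjective f ∧ ProjDimLE Q n (LinearMap.ker f)

/-- The flat dimension `fd_Q N` is finite. -/
def FlatDimFinite (Q : Type u) [CommRing Q] (N : Type u) [AddCommGroup N] [Module Q N] : Prop :=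
  ∃ n : ℕ, FlatDimLE Q n N

/-- The projective dimension `pd_Q N` is finite. -/
def ProjDimFinite (Q : Type u) [CommRing Q] (N : Type u) [AddCommGroup N] [Module Q N] : Prop :=
  ∃ n : ℕ, ProjDimLE Q n N

/-! ### Regular sequences, regular local rings, complete intersection conditions -/

/-- The ideal `I` is generated by an `A`-regular sequence. -/
def GeneratedByRegularSequence (A : Type u) [CommRing A] (I : Ideal A) : Prop :=
  ∃ rs : List A, RingTheory.Sequence.IsRegular A rs ∧ Ideal.span {x | x ∈ rs} = I

/-- A (Noetherian local) ring is regular iff its maximal ideal is generated by a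
regular sequence. -/
def IsRegularLocal (A : Type u) [CommRing A] : Prop :=
  IsNoetherianRing A ∧
    ∃ h : IsLocalRing A, GeneratedByRegularSequence A (@IsLocalRing.maximalIdeal A _ h)

/-- A local homomorphism is weakly regular if it is flat with regular closed fibre. -/
def IsWeaklyRegularHom (A B : Type u) [CommRing A] [CommRing B] [IsLocalRing A]
    (f : A →+* B) : Prop :=
  IsLocalHom f ∧ (letI := f.toAlgebra; Module.Flat A B) ∧
    IsRegularLocal (B ⧸ Ideal.map f (maximalIdeal A))

/-- `R'' → f → g` is a Cohen factorization of the semi-completion of `ψ : A → B`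
with respect to the (maximal) ideal `J` of `B`:  `A → R'' → B̂` with `A → R''`
weakly regular, `R''` complete Noetherian local and `R'' → B̂` surjective local. -/
def IsCohenFactorizationAt (A B : Type u) [CommRing A] [CommRing B] [IsLocalRing A]
    (ψ : A →+* B) (J : Ideal B) (R'' : Type u) [CommRing R'']
    (f : A →+* R'') (g : R'' →+* AdicCompletion J B) : Prop :=
  g.comp f = (algebraMap B (AdicCompletion J B)).comp ψ ∧
  IsNoetherianRing R'' ∧
  (∃ h : IsLocalRing R'', IsAdicComplete (@IsLocalRing.maximalIdeal R'' _ h) R'') ∧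
  IsWeaklyRegularHom A R'' f ∧
  Function.Surjective g ∧ IsLocalHom g

/-- `ψ : A → B` is complete intersection (c.i.) at the ideal `J` (typically the
maximal ideal of `B`): in a Cohen factorization `A → R'' → B̂` of the
semi-completion of `ψ`, the kernel of `R'' → B̂` is generated by a regular sequence. -/
def IsCIAt (A B : Type u) [CommRing A] [CommRing B] [IsLocalRing A]
    (ψ : A →+* B) (J : Ideal B) : Prop :=
  ∃ (R'' : Type u) (_ : CommRing R'') (f : A →+* R'') (g : R'' →+* AdicCompletion J B),
    IsCohenFactorizationAt A B ψ J R'' f g ∧ GeneratedByRegularSequence R'' (RingHom.ker g)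

/-- A Noetherian local ring is a complete intersection if its completion is the
quotient of a complete regular local ring by an ideal generated by a regular sequence. -/
def IsCompleteIntersectionRing (A : Type u) [CommRing A] : Prop :=
  IsNoetherianRing A ∧
  ∃ h : IsLocalRing A,
    ∃ (Q : Type u) (_ : CommRing Q)
      (g : Q →+* AdicCompletion (@IsLocalRing.maximalIdeal A _ h) A),
      IsRegularLocal Q ∧ (∃ hq : IsLocalRing Q, IsAdicComplete (@IsLocalRing.maximalIdeal Q _ hq) Q) ∧
      Function.Surjective g ∧ GeneratedByRegularSequence Q (RingHom.ker g)

/-! ### Complete intersection (flat) dimensions via quasi-deformations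

`R → R' ← Q` is a quasi-deformation when `R → R'` is flat local and `Q → R'` is
surjective local with kernel generated by a `Q`-regular sequence (all rings
Noetherian local).  The various complete intersection (flat) dimensions
`CI-fd`, `CI-dim`, `CI*-fd`, `CI*-dim`, `cidim-fd`, `cidim` of a module `M` are
`inf { fd_Q(R' ⊗_R M) - pd_Q R' }` over (upper / complete intersection)
quasi-deformations; such a dimension is finite iff there is a quasi-deformation
of the appropriate kind for which both `fd_Q (R' ⊗_R M)` and `pd_Q R'` are finite. -/

/-- The conditions on `R → R' ← Q` making it a quasi-deformation. -/
def IsQuasiDeformation (R R' Q : Type u) [CommRing R] [CommRing R'] [CommRing Q]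
    (f : R →+* R') (g : Q →+* R') : Prop :=
  IsLocalRing R' ∧ IsLocalRing Q ∧ IsNoetherianRing R' ∧ IsNoetherianRing Q ∧
  IsLocalHom f ∧ IsLocalHom g ∧ (letI := f.toAlgebra; Module.Flat R R') ∧
  Function.Surjective g ∧ GeneratedByRegularSequence Q (RingHom.ker g)

/-- `CI-fd_R M < ∞` (equivalently, for finitely generated `M`, `CI-dim_R M < ∞`):
there is a quasi-deformation `R → R' ← Q` with `fd_Q (R' ⊗_R M)` and `pd_Q R'` finite. -/
def HasFiniteCIDim (R : Type u) [CommRing R] (M : Type u) [AddCommGroup M] [Module R M] : Prop :=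
  ∃ (R' Q : Type u) (_ : CommRing R') (_ : CommRing Q) (f : R →+* R') (g : Q →+* R'),
    IsQuasiDeformation R R' Q f g ∧
    (letI := f.toAlgebra;
     letI := g.toAlgebra;
     letI : Module Q (R' ⊗[R] M) := Module.compHom _ g;
     FlatDimFinite Q (R' ⊗[R] M) ∧ ProjDimFinite Q R')

/-- `CI*-fd_R M < ∞` (resp. `CI*-dim_R M < ∞`): as in `HasFiniteCIDim` but over
upper quasi-deformations, i.e. `R → R'` is weakly regular. -/
def HasFiniteUpperCIDim (R : Type u) [CommRing R] [IsLocalRing R]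
    (M : Type u) [AddCommGroup M] [Module R M] : Prop :=
  ∃ (R' Q : Type u) (_ : CommRing R') (_ : CommRing Q) (f : R →+* R') (g : Q →+* R'),
    IsQuasiDeformation R R' Q f g ∧ IsWeaklyRegularHom R R' f ∧
    (letI := f.toAlgebra;
     letI := g.toAlgebra;
     letI : Module Q (R' ⊗[R] M) := Module.compHom _ g;
     FlatDimFinite Q (R' ⊗[R] M) ∧ ProjDimFinite Q R')

/-- `cidim-fd_R M < ∞` (resp. `cidim_R M < ∞`): as in `HasFiniteCIDim` but over
complete intersection quasi-deformations, i.e. `R → R'` is c.i. at the maximal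
ideal of `R'`. -/
def HasFiniteCIQDDim (R : Type u) [CommRing R] [IsLocalRing R]
    (M : Type u) [AddCommGroup M] [Module R M] : Prop :=
  ∃ (R' Q : Type u) (_ : CommRing R') (_ : CommRing Q) (hR' : IsLocalRing R')
    (f : R →+* R') (g : Q →+* R'),
    IsQuasiDeformation R R' Q f g ∧
    IsCIAt R R' f (@IsLocalRing.maximalIdeal R' _ hR') ∧
    (letI := f.toAlgebra;
     letI := g.toAlgebra;
     letI : Module Q (R' ⊗[R] M) := Module.compHom _ g;
     FlatDimFinite Q (R' ⊗[R] M) ∧ ProjDimFinite Q R')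

/-! ### André–Quillen homology

`D_n(S|R, M)` is defined as the `n`-th homology of `L ⊗_S M`, where `L` is the
cotangent complex of the `R`-algebra `S`: the complex associated to the standard
simplicial resolution `X` of `S` by polynomial `R`-algebras (the comonad
resolution `X_n = G^{n+1} S`, `G A = R[A]`), with `L_n = S ⊗_{X_n} Ω_{X_n/R}`
the free `S`-module on the variables of `X_n` and differentials the alternating
sums of the maps induced by the face maps. -/

/-- `AQV R S n` is, for `n ≥ 1`, the `n`-th ring in the standard simplicial
polynomial resolution of `S` over `R` (and `AQV R S 0 = S` as an index set). -/
def AQV (R S : Type u) [CommRing R] : ℕ → Type u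
  | 0 => S
  | n+1 => MvPolynomial (AQV R S n) R

noncomputable instance (R S : Type u) [CommRing R] (n : ℕ) : CommRing (AQV R S (n+1)) :=
  inferInstanceAs (CommRing (MvPolynomial (AQV R S n) R))

noncomputable instance (R S : Type u) [CommRing R] (n : ℕ) : Algebra R (AQV R S (n+1)) :=
  inferInstanceAs (Algebra R (MvPolynomial (AQV R S n) R))

/-- The augmentations `X_n → S` of the standard resolution. -/
def AQaug (R S : Type u) [CommRing R] [CommRing S] [Algebra R S] :
    (n : ℕ) → (AQV R S (n+1) →ₐ[R] S)
  | 0 => MvPolynomial.aeval (id : S → S)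
  | n+1 => MvPolynomial.aeval (fun v : AQV R S (n+1) => AQaug R S n v)

/-- The face maps `dᵢ : X_{n+1} → X_n` of the standard resolution: `d₀` is the
counit and `d_{i+1} = G(dᵢ)`. -/
def AQface (R S : Type u) [CommRing R] [CommRing S] [Algebra R S] :
    (n : ℕ) → (i : ℕ) → (AQV R S (n+2) →ₐ[R] AQV R S (n+1))
  | n, 0 => MvPolynomial.aeval (id : AQV R S (n+1) → AQV R S (n+1))
  | 0, _+1 => MvPolynomial.rename ⇑(AQaug R S 0)
  | n+1, i+1 => MvPolynomial.rename ⇑(AQface R S n i)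

variable (R S : Type u) [CommRing R] [CommRing S] [Algebra R S]
variable (M : Type u) [AddCommGroup M] [Module S M]

/-- The map `L_{n+1} ⊗ M → L_n ⊗ M` induced by an `R`-algebra map
`f : X_{n+1} → X_n` on the (base-changed) Kähler differentials: the free module
on the variables `v` of `X_{n+1}` maps by `e_v ↦ ∑_w aug(∂(f Xᵥ)/∂w) • e_w`. -/
def AQind (n : ℕ) (f : AQV R S (n+2) →ₐ[R] AQV R S (n+1)) :
    (AQV R S (n+1) →₀ M) →ₗ[S] (AQV R S n →₀ M) :=
  Finsupp.lsum S fun v : AQV R S (n+1) =>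
    letI : DecidableEq (AQV R S n) := Classical.decEq _
    let P : MvPolynomial (AQV R S n) R := f (MvPolynomial.X v)
    ∑ w ∈ P.vars,
      (Finsupp.lsingle w).comp
        ((AQaug R S n ((MvPolynomial.pderiv w) P) : S) • (LinearMap.id : M →ₗ[S] M))

/-- The differential `L_{n+1} ⊗ M → L_n ⊗ M` of the cotangent complex:
the alternating sum of the maps induced by the face maps. -/
def AQdiff (n : ℕ) : (AQV R S (n+1) →₀ M) →ₗ[S] (AQV R S n →₀ M) :=
  ∑ i ∈ Finset.range (n+2), ((-1 : ℤ)^i) • AQind R S M n (AQface R S n i)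

/-- Cycles of the cotangent complex with coefficients in `M`. -/
def AQcycles : (n : ℕ) → Submodule S (AQV R S n →₀ M)
  | 0 => ⊤
  | n+1 => LinearMap.ker (AQdiff R S M n)

/-- André–Quillen homology `D_n(S|R, M)`. -/
def AQH (n : ℕ) : Type u :=
  AQcycles R S M n ⧸
    (LinearMap.range (AQdiff R S M n)).comap (AQcycles R S M n).subtype

noncomputable instance (n : ℕ) : AddCommGroup (AQH R S M n) :=
  inferInstanceAs (AddCommGroup (AQcycles R S M n ⧸
    (LinearMap.range (AQdiff R S M n)).comap (AQcycles R S M n).subtype))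

/-- `AQdimLE R S d`: the André–Quillen dimension of the `R`-algebra `S` is at
most `d`, i.e. `D_n(S|R, -) = 0` for all `n > d`. -/
def AQdimLE (d : ℕ) : Prop :=
  ∀ n : ℕ, d < n → ∀ (N : Type u) (iN : AddCommGroup N) (mN : Module S N),
    Subsingleton (@AQH R S _ _ _ N iN mN n)

/-- `AQ-dim_R S < ∞`. -/
def AQdimFinite : Prop := ∃ d : ℕ, AQdimLE R S d

/-! ### Koszul homology `H₁` -/

/-- First differential of the Koszul complex on `x : Fin c → A`. -/
def koszulD1 (A : Type u) [CommRing A] {c : ℕ} (x : Fin c → A) : (Fin c → A) →ₗ[A] A :=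
  ∑ i, x i • (LinearMap.proj i : ((Fin c → A)) →ₗ[A] A)

/-- One-cycles of the Koszul complex on `x`. -/
def koszulZ1 (A : Type u) [CommRing A] {c : ℕ} (x : Fin c → A) : Submodule A (Fin c → A) :=
  LinearMap.ker (koszulD1 A x)

/-- One-boundaries of the Koszul complex on `x` (the image of the second Koszul
differential, spanned by the elements `xᵢ eⱼ - xⱼ eᵢ`). -/
def koszulB1 (A : Type u) [CommRing A] {c : ℕ} (x : Fin c → A) : Submodule A (Fin c → A) :=
  Submodule.span A
    {v : Fin c → A | ∃ i j, v =
      x i • (Pi.single j (1 : A) : Fin c → A) - x j • (Pi.single i (1 : A) : Fin c → A)}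

/-- First Koszul homology of the sequence `x : Fin c → A`. -/
def KoszulH1 (A : Type u) [CommRing A] {c : ℕ} (x : Fin c → A) : Type u :=
  koszulZ1 A x ⧸ (koszulB1 A x).comap (koszulZ1 A x).subtype

noncomputable instance (A : Type u) [CommRing A] {c : ℕ} (x : Fin c → A) :
    AddCommGroup (KoszulH1 A x) :=
  inferInstanceAs (AddCommGroup (koszulZ1 A x ⧸ (koszulB1 A x).comap (koszulZ1 A x).subtype))

noncomputable instance (A : Type u) [CommRing A] {c : ℕ} (x : Fin c → A) :
    Module A (KoszulH1 A x) :=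
  inferInstanceAs (Module A (koszulZ1 A x ⧸ (koszulB1 A x).comap (koszulZ1 A x).subtype))

/-- `H₁(K(σ))` is a free `T̂`-module:  for any Cohen factorization
`S → S'' → T̂` of the semi-completion of `σ` and any finite generating set `x` of
`ker (S'' → T̂)`, the first Koszul homology of `x`, base-changed to `T̂`
(it is killed by `ker (S'' → T̂)`), is a free `T̂`-module. -/
def KoszulH1FreeHom (S T : Type u) [CommRing S] [CommRing T] [IsLocalRing S] [IsLocalRing T]
    (σ : S →+* T) : Prop :=
  ∀ (S'' : Type u) (_ : CommRing S'') (f : S →+* S'')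
    (g : S'' →+* AdicCompletion (maximalIdeal T) T),
    IsCohenFactorizationAt S T σ (maximalIdeal T) S'' f g →
    ∀ (c : ℕ) (x : Fin c → S''), Ideal.span (Set.range x) = RingHom.ker g →
      (letI := g.toAlgebra;
       Module.Free (AdicCompletion (maximalIdeal T) T)
         ((AdicCompletion (maximalIdeal T) T) ⊗[S''] (KoszulH1 S'' x)))

/-! ### Separability (MacLane) -/

/-- A field extension `ℓ/k` is separable (in the sense of MacLane, allowing
non-algebraic extensions) iff `K ⊗_k ℓ` is reduced for every field extension `K/k`. -/
def IsSeparableFieldExtension (k ℓ : Type u) [Field k] [Field ℓ] [Algebra k ℓ] : Prop :=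
  ∀ (K : Type u) (_ : Field K) (_ : Algebra k K), IsReduced (K ⊗[k] ℓ)

end


open RingTheory.Sequence

lemma qd_append_iff {A B : Type u} [CommRing A] [CommRing B] (π : A →+* B)
    (hπ : Function.Surjective π) (ys xs : List A)
    (hk : Ideal.ofList ys = RingHom.ker π) :
    IsWeaklyRegular A (ys ++ xs) ↔ IsWeaklyRegular A ys ∧ IsWeaklyRegular B (xs.map π) := by
  let _ := π.toAlgebra
  rw [isWeaklyRegular_append_iff]
  refine and_congr_right fun _ => ?_
  have e1 : (Ideal.ofList ys • ⊤ : Submodule A A) = LinearMap.ker (Algebra.linearMap A B) := by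
    rw [smul_eq_mul, Ideal.mul_top, hk]
    rfl
  have e : (A ⧸ (Ideal.ofList ys • ⊤ : Submodule A A)) ≃ₗ[A] B :=
    (Submodule.quotEquivOfEq _ _ e1).trans
      (LinearMap.quotKerEquivOfSurjective (Algebra.linearMap A B) hπ)
  rw [e.isWeaklyRegular_congr xs]
  exact (isWeaklyRegular_map_algebraMap_iff B B xs).symm

lemma qd_mem_maximal {A : Type u} [CommRing A] [IsLocalRing A] {I : Ideal A} (hI : I ≠ ⊤)
    {ys : List A} (h : Ideal.ofList ys = I) : ∀ y ∈ ys, y ∈ maximalIdeal A := fun _ hy =>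
  IsLocalRing.le_maximalIdeal hI (h ▸ Ideal.subset_span hy)

lemma qd_gen_equiv {A B : Type u} [CommRing A] [CommRing B] (e : A ≃+* B) (I : Ideal A)
    (h : GeneratedByRegularSequence A I) : GeneratedByRegularSequence B (I.map (e : A →+* B)) := by
  obtain ⟨rs, hr, rfl⟩ := h
  refine ⟨rs.map (e : A →+* B), ?_, ?_⟩
  · refine (AddEquiv.isRegular_congr (e := e.toAddEquiv) ?_).mp hr
    exact List.forall₂_map_right_iff.mpr <| List.forall₂_same.mpr fun r _ x => by simp
  · exact (Ideal.map_ofList _ _).symm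

lemma qd_map_maximal {A B : Type u} [CommRing A] [CommRing B] [IsLocalRing A] [IsLocalRing B]
    (π : A →+* B) (hπ : Function.Surjective π) :
    (maximalIdeal A).map π = maximalIdeal B := by
  have : IsLocalHom π := hπ.isLocalHom
  have h4 : (maximalIdeal B).comap π = maximalIdeal A :=
    ((IsLocalRing.local_hom_TFAE π).out 0 4).mp this
  rw [← h4, Ideal.map_comap_of_surjective π hπ]

lemma qd_regular_equiv {A B : Type u} [CommRing A] [CommRing B] (e : A ≃+* B)
    (h : IsRegularLocal A) : IsRegularLocal B := by
  obtain ⟨h1, h2, h3⟩ := h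
  have hB : IsLocalRing B := e.isLocalRing
  refine ⟨isNoetherianRing_of_ringEquiv A e, hB, ?_⟩
  rw [← qd_map_maximal (e : A →+* B) e.surjective]
  exact qd_gen_equiv e _ h3

lemma qd_precomplete {A B : Type u} [CommRing A] [CommRing B] [IsLocalRing A] [IsLocalRing B]
    [IsNoetherianRing A] [IsNoetherianRing B]
    (hA : IsAdicComplete (maximalIdeal A) A)
    (π : A →+* B) (hπ : Function.Surjective π) : IsAdicComplete (maximalIdeal B) B := by
  let _ := π.toAlgebra
  have : IsPrecomplete (maximalIdeal B) B := by
    rw [← qd_map_maximal π hπ]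
    refine IsPrecomplete.map_algebraMap_iff.mpr ?_
    rw [← AdicCompletion.of_surjective_iff]
    intro y
    obtain ⟨x, rfl⟩ := AdicCompletion.map_surjective (maximalIdeal A)
      (f := Algebra.linearMap A B) hπ y
    obtain ⟨z, rfl⟩ := AdicCompletion.of_surjective (maximalIdeal A) A x
    exact ⟨π z, rfl⟩
  exact {}

lemma qd_closed {A : Type u} [CommRing A] [IsLocalRing A] [IsNoetherianRing A] (K : Ideal A)
    (x : A) (h : ∀ n, x ∈ K ⊔ (maximalIdeal A) ^ n) : x ∈ K := by
  have hH : IsHausdorff (maximalIdeal A) (A ⧸ K) := inferInstance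
  rw [← Ideal.Quotient.eq_zero_iff_mem]
  refine hH.haus _ fun n => ?_
  rw [SModEq.zero]
  obtain ⟨a, ha, b, hb, rfl⟩ := Submodule.mem_sup.mp (h n)
  rw [map_add, Ideal.Quotient.eq_zero_iff_mem.mpr ha, zero_add]
  have : Ideal.Quotient.mk K b = b • (1 : A ⧸ K) := by
    rw [Algebra.smul_def, mul_one]; rfl
  rw [this]
  exact Submodule.smul_mem_smul hb trivial

lemma qd_ker_eval {A : Type u} [CommRing A] [IsLocalRing A] [IsNoetherianRing A] (n : ℕ)
    (x : AdicCompletion (maximalIdeal A) A) (h : AdicCompletion.evalₐ (maximalIdeal A) n x = 0) :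
    x ∈ (maximalIdeal (AdicCompletion (maximalIdeal A) A)) ^ n := by
  have h1 : x ∈ (AdicCompletion.eval (maximalIdeal A) A n).ker := by
    rw [LinearMap.mem_ker, ← AdicCompletion.factor_evalₐ_eq_eval (maximalIdeal A) x
      (by rw [smul_eq_mul, Ideal.mul_top]), h, map_zero]
  rw [← AdicCompletion.pow_smul_top_eq_ker_eval (maximalIdeal A).fg_of_isNoetherianRing,
    Ideal.smul_top_eq_map] at h1
  rw [AdicCompletion.maximalIdeal_eq_map, ← Ideal.map_pow]
  exact h1

lemma qd_completion {A B : Type u} [CommRing A] [CommRing B] [IsLocalRing A] [IsLocalRing B]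
    [IsNoetherianRing A] [IsNoetherianRing B] (π : A →+* B) (hπ : Function.Surjective π)
    [IsNoetherianRing (AdicCompletion (maximalIdeal A) A)] :
    ∃ p : AdicCompletion (maximalIdeal A) A →+* AdicCompletion (maximalIdeal B) B,
      p.comp (algebraMap A _) = (algebraMap B _).comp π ∧ Function.Surjective p ∧
      RingHom.ker p = (RingHom.ker π).map (algebraMap A _) := by
  have hm := qd_map_maximal π hπ
  have hle : ∀ n, maximalIdeal A ^ n ≤ (maximalIdeal B ^ n).comap π := fun n => by
    rw [← hm, ← Ideal.map_pow]; exact Ideal.le_comap_map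
  let φ : ∀ n, AdicCompletion (maximalIdeal A) A →+* B ⧸ maximalIdeal B ^ n := fun n =>
    (Ideal.quotientMap _ π (hle n)).comp
      (AdicCompletion.evalₐ (maximalIdeal A) n : _ →+* _)
  have hφ : ∀ {m n : ℕ} (h : m ≤ n),
      (Ideal.Quotient.factorPow (maximalIdeal B) h).comp (φ n) = φ m := by
    intro m n h
    ext x
    obtain ⟨x, rfl⟩ := AdicCompletion.mk_surjective _ _ x
    simp only [φ, RingHom.comp_apply, RingHom.coe_coe, AdicCompletion.evalₐ_mk,
      Ideal.quotientMap_mk]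
    have h1 := (Ideal.Quotient.eq).mp (AdicCompletion.Ideal.mk_eq_mk (maximalIdeal A) h x)
    refine (Ideal.Quotient.eq (I := maximalIdeal B ^ m)).mpr ?_
    rw [← map_sub π]
    exact hle m h1
  let p := AdicCompletion.liftRingHom (maximalIdeal B) φ hφ
  have hp : p.comp (algebraMap A _) = (algebraMap B _).comp π := by
    refine RingHom.ext fun a => ?_
    refine AdicCompletion.ext_evalₐ (I := maximalIdeal B) fun n => ?_
    simp [p, φ]
  have hmm : (maximalIdeal (AdicCompletion (maximalIdeal A) A)).map p =
      maximalIdeal (AdicCompletion (maximalIdeal B) B) := by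
    rw [AdicCompletion.maximalIdeal_eq_map, AdicCompletion.maximalIdeal_eq_map, Ideal.map_map, hp,
      ← Ideal.map_map, hm]
  refine ⟨p, hp, ?_, ?_⟩
  · have hH : IsHausdorff ((maximalIdeal (AdicCompletion (maximalIdeal A) A)).map p)
        (AdicCompletion (maximalIdeal B) B) := by rw [hmm]; infer_instance
    refine surjective_of_mk_map_comp_surjective
      (I := maximalIdeal (AdicCompletion (maximalIdeal A) A)) p ?_
    intro y
    obtain ⟨y, rfl⟩ := Ideal.Quotient.mk_surjective y
    obtain ⟨b, hb⟩ := Ideal.Quotient.mk_surjective (AdicCompletion.evalₐ (maximalIdeal B) 1 y)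
    obtain ⟨a, rfl⟩ := hπ b
    refine ⟨algebraMap A _ a, ?_⟩
    rw [RingHom.comp_apply, Ideal.Quotient.eq, hmm, ← pow_one (maximalIdeal (AdicCompletion (maximalIdeal B) B))]
    refine qd_ker_eval 1 _ ?_
    have := RingHom.congr_fun hp a
    simp only [RingHom.comp_apply] at this
    rw [this, map_sub, ← hb]
    simp
  · apply le_antisymm
    · intro x hx
      refine qd_closed _ _ fun n => ?_
      obtain ⟨a, ha⟩ := Ideal.Quotient.mk_surjective (AdicCompletion.evalₐ (maximalIdeal A) n x)
      have h0 : φ n x = 0 := by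
        rw [← AdicCompletion.evalₐ_liftRingHom (maximalIdeal B) φ hφ n x]
        change AdicCompletion.evalₐ (maximalIdeal B) n (p x) = 0
        rw [show p x = 0 from hx, map_zero]
      have h1 : π a ∈ maximalIdeal B ^ n := by
        rw [← Ideal.Quotient.eq_zero_iff_mem, ← h0]
        simp [φ, ← ha]
      have h2 : a ∈ RingHom.ker π ⊔ maximalIdeal A ^ n := by
        rw [← hm, ← Ideal.map_pow, ← Ideal.mem_comap, Ideal.comap_map_of_surjective π hπ] at h1
        rw [sup_comm]; exact h1
      have h3 : algebraMap A (AdicCompletion (maximalIdeal A) A) a ∈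
          (RingHom.ker π).map (algebraMap A (AdicCompletion (maximalIdeal A) A)) ⊔
          maximalIdeal (AdicCompletion (maximalIdeal A) A) ^ n := by
        rw [AdicCompletion.maximalIdeal_eq_map, ← Ideal.map_pow, ← Ideal.map_sup]
        exact Ideal.mem_map_of_mem _ h2
      have h4 : x - algebraMap A (AdicCompletion (maximalIdeal A) A) a ∈
          maximalIdeal (AdicCompletion (maximalIdeal A) A) ^ n := by
        refine qd_ker_eval n _ ?_
        rw [map_sub, ← ha]
        simp
      rw [← sub_add_cancel x (algebraMap A (AdicCompletion (maximalIdeal A) A) a)]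
      exact add_mem (Ideal.mem_sup_right h4) h3
    · rw [Ideal.map_le_iff_le_comap]
      intro a ha
      have := RingHom.congr_fun hp a
      simp only [RingHom.comp_apply] at this
      rw [Ideal.mem_comap, RingHom.mem_ker, this, RingHom.mem_ker.mp ha, map_zero]

section qdTensor

set_option linter.unusedSectionVars false

variable (R S B : Type u) [CommRing R] [CommRing S] [CommRing B]
    [IsLocalRing R] [IsLocalRing S] [IsLocalRing B] [Algebra R S] [Algebra R B]

/-- The map `B → S ⊗ B`. -/
abbrev qdInc : B →+* S ⊗[R] B :=
  (Algebra.TensorProduct.includeRight : B →ₐ[R] S ⊗[R] B).toRingHom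

lemma qdInc_comp : (qdInc R S B).comp (algebraMap R B) =
    (algebraMap S (S ⊗[R] B)).comp (algebraMap R S) := by
  ext r
  simp only [RingHom.comp_apply]
  rw [← IsScalarTower.algebraMap_apply R S (S ⊗[R] B)]
  exact (Algebra.TensorProduct.includeRight : B →ₐ[R] S ⊗[R] B).commutes r

lemma qdInc_surj (hsur : Function.Surjective (algebraMap R S)) :
    Function.Surjective (qdInc R S B) :=
  Algebra.TensorProduct.includeRight_surjective _ hsur

lemma qdInc_ker (hsur : Function.Surjective (algebraMap R S)) :
    RingHom.ker (qdInc R S B) =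
    (RingHom.ker (algebraMap R S)).map (algebraMap R B) := by
  apply le_antisymm
  · intro b hb
    let e : (R ⧸ LinearMap.ker (Algebra.linearMap R S)) ≃ₗ[R] S :=
      LinearMap.quotKerEquivOfSurjective (Algebra.linearMap R S) hsur
    let I : Ideal R := LinearMap.ker (Algebra.linearMap R S)
    have h0 : (1 : S) ⊗ₜ[R] b = 0 := hb
    have h1 : (Ideal.Quotient.mk I 1) ⊗ₜ[R] b = (0 : (R ⧸ I) ⊗[R] B) := by
      have h2 : e (Submodule.Quotient.mk 1) = 1 := by
        change Algebra.linearMap R S 1 = 1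
        simp
      apply (TensorProduct.congr e (LinearEquiv.refl R B)).injective
      rw [map_zero, ← h0]
      exact (TensorProduct.congr_tmul _ _ _ _).trans (congrArg (fun t => t ⊗ₜ[R] b) h2)
    have h3 := congrArg (TensorProduct.quotTensorEquivQuotSMul B I) h1
    rw [map_zero, TensorProduct.quotTensorEquivQuotSMul_mk_tmul, one_smul,
      Submodule.Quotient.mk_eq_zero, Ideal.smul_top_eq_map] at h3
    exact h3
  · rw [Ideal.map_le_iff_le_comap]
    intro r hr
    have h2 := RingHom.congr_fun (qdInc_comp R S B) r
    simp only [RingHom.comp_apply] at h2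
    rw [Ideal.mem_comap, RingHom.mem_ker, h2, RingHom.mem_ker.mp hr, map_zero]

lemma qdInc_ker_le (hsur : Function.Surjective (algebraMap R S))
    [IsLocalHom (algebraMap R B)] : RingHom.ker (qdInc R S B) ≤
    (maximalIdeal R).map (algebraMap R B) := by
  rw [qdInc_ker R S B hsur]
  exact Ideal.map_mono (IsLocalRing.le_maximalIdeal (RingHom.ker_ne_top _))

lemma qd_local (hsur : Function.Surjective (algebraMap R S))
    [IsLocalHom (algebraMap R B)] : IsLocalRing (S ⊗[R] B) := by
  have : Nontrivial (S ⊗[R] B) := by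
    refine ⟨⟨0, 1, fun h => ?_⟩⟩
    have h1 : (1 : B) ∈ RingHom.ker (qdInc R S B) := by
      rw [RingHom.mem_ker, map_one, ← h]
    have h2 : (maximalIdeal R).map (algebraMap R B) ≤ maximalIdeal B :=
      ((IsLocalRing.local_hom_TFAE (algebraMap R B)).out 0 2).mp ‹_›
    exact (Ideal.ne_top_iff_one _).mp (maximalIdeal.isMaximal B).ne_top
      (h2 (qdInc_ker_le R S B hsur h1))
  exact IsLocalRing.of_surjective' (qdInc R S B) (qdInc_surj R S B hsur)

lemma qd_noeth (hsur : Function.Surjective (algebraMap R S)) [IsNoetherianRing B] : IsNoetherianRing (S ⊗[R] B) :=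
  isNoetherianRing_of_surjective _ _ (qdInc R S B) (qdInc_surj R S B hsur)

lemma qd_localHom (hsur : Function.Surjective (algebraMap R S))
    [IsLocalHom (algebraMap R B)] : IsLocalHom (algebraMap S (S ⊗[R] B)) := by
  have := qd_local R S B hsur
  have h1 : IsLocalHom (qdInc R S B) := (qdInc_surj R S B hsur).isLocalHom
  refine ⟨fun s hs => ?_⟩
  obtain ⟨r, rfl⟩ := hsur s
  have h2 := RingHom.congr_fun (qdInc_comp R S B) r
  simp only [RingHom.comp_apply] at h2
  rw [← h2] at hs
  exact (isUnit_of_map_unit (algebraMap R B) r (isUnit_of_map_unit (qdInc R S B) _ hs)).map _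

lemma qd_fibre (hsur : Function.Surjective (algebraMap R S))
    [IsLocalHom (algebraMap R B)] : Nonempty
        (((S ⊗[R] B) ⧸ Ideal.map (algebraMap S (S ⊗[R] B)) (maximalIdeal S)) ≃+*
          (B ⧸ Ideal.map (algebraMap R B) (maximalIdeal R))) := by
  have h1 : Ideal.map (algebraMap S (S ⊗[R] B)) (maximalIdeal S) =
      ((maximalIdeal R).map (algebraMap R B)).map (qdInc R S B) := by
    rw [Ideal.map_map, qdInc_comp, ← Ideal.map_map, qd_map_maximal _ hsur]
  let ψ := (Ideal.Quotient.mk (Ideal.map (algebraMap S (S ⊗[R] B)) (maximalIdeal S))).comp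
    (qdInc R S B)
  have hψ : Function.Surjective ψ :=
    Ideal.Quotient.mk_surjective.comp (qdInc_surj R S B hsur)
  have hk : RingHom.ker ψ = Ideal.map (algebraMap R B) (maximalIdeal R) := by
    rw [← RingHom.comap_ker, Ideal.mk_ker, h1,
      Ideal.comap_map_of_surjective _ (qdInc_surj R S B hsur)]
    exact sup_eq_left.mpr (qdInc_ker_le R S B hsur)
  exact ⟨((Ideal.quotEquivOfEq hk.symm).trans (RingHom.quotientKerEquivOfSurjective hψ)).symm⟩

lemma qd_flat [Module.Flat R B] : (algebraMap S (S ⊗[R] B)).Flat := by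
  rw [RingHom.flat_algebraMap_iff]
  infer_instance

lemma qd_weaklyRegular (hsur : Function.Surjective (algebraMap R S))
    [IsLocalHom (algebraMap R B)] [Module.Flat R B]
    (h : IsRegularLocal (B ⧸ Ideal.map (algebraMap R B) (maximalIdeal R))) :
    IsWeaklyRegularHom S (S ⊗[R] B) (algebraMap S (S ⊗[R] B)) :=
  ⟨qd_localHom R S B hsur, qd_flat R S B,
    qd_regular_equiv (qd_fibre R S B hsur).some.symm h⟩

end qdTensor

lemma qd_ci
    (R S R' : Type u) [CommRing R] [CommRing S] [CommRing R']
    [IsLocalRing R] [IsLocalRing S] [IsLocalRing R']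
    [IsNoetherianRing R] [IsNoetherianRing S] [IsNoetherianRing R']
    [Algebra R S]
    (hsur : Function.Surjective (algebraMap R S))
    (hker : GeneratedByRegularSequence R (RingHom.ker (algebraMap R S)))
    [Algebra R R'] [IsLocalHom (algebraMap R R')] [Module.Flat R R']
    (hS' : IsLocalRing (S ⊗[R] R'))
    (h : IsCIAt R R' (algebraMap R R') (maximalIdeal R')) :
    IsCIAt S (S ⊗[R] R') (algebraMap S (S ⊗[R] R')) (maximalIdeal (S ⊗[R] R')) := by
  obtain ⟨A, iA, f, g, ⟨hcomp, hN, ⟨hL, hC⟩, ⟨hf1, hf2, hf3⟩, hgs, hgl⟩, ys, hys, hyk⟩ := h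
  obtain ⟨xs, hxs, hxk⟩ := hker
  let _ : Algebra R A := f.toAlgebra
  have hfl : Module.Flat R A := hf2
  have hfloc : IsLocalHom (algebraMap R A) := hf1
  have hNS' : IsNoetherianRing (S ⊗[R] R') := qd_noeth R S R' hsur
  have hLC : IsLocalRing (S ⊗[R] A) := qd_local R S A hsur
  have hNC : IsNoetherianRing (S ⊗[R] A) := qd_noeth R S A hsur
  have hNh : IsNoetherianRing (AdicCompletion (maximalIdeal R') R') :=
    isNoetherianRing_of_surjective _ _ g hgs
  obtain ⟨p, hp1, hp2, hp3⟩ := qd_completion (qdInc R S R') (qdInc_surj R S R' hsur)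
  have hcomp' : g.comp (algebraMap R A) = (algebraMap R' _).comp (algebraMap R R') := hcomp
  -- kernel of `p`
  have hkp : RingHom.ker p = ((RingHom.ker (algebraMap R S)).map (algebraMap R A)).map g := by
    rw [hp3, qdInc_ker R S R' hsur, Ideal.map_map, Ideal.map_map, hcomp']
  have hkpg : RingHom.ker (p.comp g) = RingHom.ker (qdInc R S A) ⊔ RingHom.ker g := by
    rw [← RingHom.comap_ker, hkp, Ideal.comap_map_of_surjective _ hgs, ← qdInc_ker R S A hsur]
    rfl
  have hπ := qdInc_surj R S A hsur
  let G : S ⊗[R] A →+* AdicCompletion (maximalIdeal (S ⊗[R] R')) (S ⊗[R] R') :=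
    RingHom.liftOfSurjective (qdInc R S A) hπ ⟨p.comp g, by rw [hkpg]; exact le_sup_left⟩
  have hG : G.comp (qdInc R S A) = p.comp g := by
    exact RingHom.liftOfRightInverse_comp _ _ _ _
  have hGs : Function.Surjective G := by
    have : Function.Surjective (G.comp (qdInc R S A)) := by
      rw [hG]; exact hp2.comp hgs
    exact Function.Surjective.of_comp this
  have hGk : RingHom.ker G = (RingHom.ker g).map (qdInc R S A) := by
    have h1 : RingHom.ker (G.comp (qdInc R S A)) = RingHom.ker (qdInc R S A) ⊔ RingHom.ker g := by rw [hG, hkpg]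
    rw [← RingHom.comap_ker] at h1
    rw [← Ideal.map_comap_of_surjective _ hπ (RingHom.ker G), h1, Ideal.map_sup,
      (Ideal.map_eq_bot_iff_le_ker _).mpr le_rfl, bot_sup_eq]
  refine ⟨S ⊗[R] A, inferInstance, algebraMap S (S ⊗[R] A), G,
    ⟨?_, hNC, ⟨hLC, qd_precomplete hC _ hπ⟩, qd_weaklyRegular R S A hsur hf3, hGs, ?_⟩, ?_⟩
  · ext s
    obtain ⟨r, rfl⟩ := hsur s
    have h1 := RingHom.congr_fun (qdInc_comp R S A) r
    have h2 := RingHom.congr_fun (qdInc_comp R S R') r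
    have h3 := RingHom.congr_fun hG (algebraMap R A r)
    have h4 := RingHom.congr_fun hcomp' r
    have h5 := RingHom.congr_fun hp1 (algebraMap R R' r)
    simp only [RingHom.comp_apply] at h1 h2 h3 h4 h5 ⊢
    rw [← h1, h3, h4, h5, h2]
  · exact hGs.isLocalHom
  · have hgt : RingHom.ker g ≠ ⊤ := RingHom.ker_ne_top g
    have hymem := qd_mem_maximal hgt hyk
    have hxmem := qd_mem_maximal (RingHom.ker_ne_top _) hxk
    have hflR : Module.Flat R (AdicCompletion (maximalIdeal R') R') :=
      Module.Flat.trans R R' _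
    have hxw : IsWeaklyRegular (AdicCompletion (maximalIdeal R') R')
        (xs.map (algebraMap R (AdicCompletion (maximalIdeal R') R'))) :=
      hxs.toIsWeaklyRegular.of_flat
    have hxe : (xs.map (algebraMap R A)).map g =
        xs.map (algebraMap R (AdicCompletion (maximalIdeal R') R')) := by
      rw [List.map_map]
      refine List.map_congr_left fun r _ => ?_
      have h4 := RingHom.congr_fun hcomp' r
      simp only [RingHom.comp_apply] at h4
      rw [Function.comp_apply, h4]
      exact (IsScalarTower.algebraMap_apply R R' _ r).symm
    have hreg : IsWeaklyRegular A (ys ++ xs.map (algebraMap R A)) := by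
      rw [qd_append_iff g hgs _ _ hyk, hxe]
      exact ⟨hys.toIsWeaklyRegular, hxw⟩
    have hreg2 : IsWeaklyRegular A (xs.map (algebraMap R A) ++ ys) := by
      refine IsLocalRing.isWeaklyRegular_of_perm_of_subset_maximalIdeal hreg
        List.perm_append_comm fun r hr => ?_
      rcases List.mem_append.mp hr with hr | hr
      · exact hymem r hr
      · obtain ⟨x, hx, rfl⟩ := List.mem_map.mp hr
        exact map_nonunit (algebraMap R A) x (hxmem x hx)
    have hk : Ideal.ofList (xs.map (algebraMap R A)) = RingHom.ker (qdInc R S A) := by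
      rw [← Ideal.map_ofList, qdInc_ker R S A hsur, ← hxk]
    rw [qd_append_iff (qdInc R S A) hπ _ _ hk] at hreg2
    have hspan : Ideal.ofList (ys.map (qdInc R S A)) = RingHom.ker G := by
      rw [← Ideal.map_ofList, hGk, ← hyk]
    exact ⟨ys.map (qdInc R S A), IsRegular.of_isWeaklyRegular_of_mem_maximalIdeal _
      (qd_mem_maximal (RingHom.ker_ne_top G) hspan) hreg2.2, hspan⟩

lemma qd_comp_gen
    (R S R' Q : Type u) [CommRing R] [CommRing S] [CommRing R'] [CommRing Q]
    [IsLocalRing R] [IsLocalRing S] [IsLocalRing R'] [IsLocalRing Q]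
    [Algebra R S]
    (hsur : Function.Surjective (algebraMap R S))
    (hker : GeneratedByRegularSequence R (RingHom.ker (algebraMap R S)))
    [Algebra R R'] [IsLocalHom (algebraMap R R')] [Module.Flat R R']
    (g : Q →+* R') (hgsur : Function.Surjective g)
    (hgker : GeneratedByRegularSequence Q (RingHom.ker g)) :
    GeneratedByRegularSequence Q (RingHom.ker ((qdInc R S R').comp g)) := by
  obtain ⟨xs, hxs, hxk⟩ := hker
  obtain ⟨ys, hys, hyk⟩ := hgker
  have hS' := qd_local R S R' hsur
  obtain ⟨zs, hz⟩ : ∃ zs : List Q, zs.map g = xs.map (algebraMap R R') := by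
    have := (List.map_surjective_iff.mpr hgsur) (xs.map (algebraMap R R'))
    exact this
  have hspan : Ideal.ofList (ys ++ zs) = RingHom.ker ((qdInc R S R').comp g) := by
    rw [← RingHom.comap_ker, qdInc_ker R S R' hsur, ← hxk]
    have h1 : Ideal.map (algebraMap R R') (Ideal.span {x | x ∈ xs}) =
        Ideal.map g (Ideal.ofList zs) := by
      rw [Ideal.map_ofList, ← hz, ← Ideal.map_ofList]
    rw [h1, Ideal.comap_map_of_surjective g hgsur, Ideal.ofList_append, sup_comm]
    congr 1
  refine ⟨ys ++ zs, IsRegular.of_isWeaklyRegular_of_mem_maximalIdeal _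
    (qd_mem_maximal (RingHom.ker_ne_top _) hspan) ?_, hspan⟩
  rw [qd_append_iff g hgsur _ _ hyk, hz]
  exact ⟨hys.toIsWeaklyRegular, hxs.toIsWeaklyRegular.of_flat⟩

/-- Base change of a quasi-deformation along a surjective c.i. local homomorphism
(Proposition: the diagram `S → S ⊗_R R' ← Q` is a quasi-deformation whose flat
part has the same closed fibre as `R → R'`; upper and complete-intersection
quasi-deformations are preserved). -/
theorem quasiDeformation_baseChange
    (R S R' Q : Type u) [CommRing R] [CommRing S] [CommRing R'] [CommRing Q]
    [IsLocalRing R] [IsLocalRing S] [IsLocalRing R'] [IsLocalRing Q]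
    [IsNoetherianRing R] [IsNoetherianRing S] [IsNoetherianRing R'] [IsNoetherianRing Q]
    [Algebra R S] [IsLocalHom (algebraMap R S)]
    (hsur : Function.Surjective (algebraMap R S))
    (hker : GeneratedByRegularSequence R (RingHom.ker (algebraMap R S)))
    [Algebra R R'] [IsLocalHom (algebraMap R R')] [Module.Flat R R']
    (g : Q →+* R') (hgl : IsLocalHom g) (hgsur : Function.Surjective g)
    (hgker : GeneratedByRegularSequence Q (RingHom.ker g)) :
    ∃ hS' : IsLocalRing (S ⊗[R] R'),
      IsQuasiDeformation S (S ⊗[R] R') Q (algebraMap S (S ⊗[R] R'))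
        ((Algebra.TensorProduct.includeRight : R' →ₐ[R] S ⊗[R] R').toRingHom.comp g) ∧
      Nonempty
        (((S ⊗[R] R') ⧸ Ideal.map (algebraMap S (S ⊗[R] R')) (maximalIdeal S)) ≃+*
          (R' ⧸ Ideal.map (algebraMap R R') (maximalIdeal R))) ∧
      (IsWeaklyRegularHom R R' (algebraMap R R') →
        IsWeaklyRegularHom S (S ⊗[R] R') (algebraMap S (S ⊗[R] R'))) ∧
      (IsCIAt R R' (algebraMap R R') (maximalIdeal R') →
        IsCIAt S (S ⊗[R] R') (algebraMap S (S ⊗[R] R'))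
          (@IsLocalRing.maximalIdeal (S ⊗[R] R') _ hS')) := by
  have hS' := qd_local R S R' hsur
  have hN := qd_noeth R S R' hsur
  have hπ := qdInc_surj R S R' hsur
  refine ⟨hS', ⟨hS', inferInstance, hN, inferInstance, qd_localHom R S R' hsur, ?_,
    qd_flat R S R', hπ.comp hgsur, qd_comp_gen R S R' Q hsur hker g hgsur hgker⟩,
    qd_fibre R S R' hsur, fun h => qd_weaklyRegular R S R' hsur h.2.2,
    fun h => qd_ci R S R' hsur hker hS' h⟩
  exact Function.Surjective.isLocalHom (f := (qdInc R S R').comp g) (hπ.comp hgsur)
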